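/- Let {𝓘_{λ_i}^{n_i} : i ∈ J} be a family of semigroups, where each λ_i is an infinite cardinal and each n_i is a positive integer, and suppose each 𝓘_{λ_i}^{n_i} carries a feebly compact shift-continuous T₁-topology (so it is a feebly compact T₁-semitopological semigroup). Then the Tychonoff product ∏_{i∈J} 𝓘_{λ_i}^{n_i} is feebly compact. -/

import Mathlib

/-!
Call a sequence `u k` in `𝓘_γ^n` pointwise convergent to `α` if every pair in the graph of `α`
lies in the graph of `u k` for all large `k`, and every other pair is missing from the graph of
`u k` for all large `k`.

* Multiplying on both sides by rank-one idempotents shows that `{x | p ∈ x.graph}` is clopen for a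
  `T₁` shift-continuous topology (`isClopen_mem_graph`). Hence `↑α` is open for each `α`, so an
  element of maximal rank in an open set is isolated: isolated points are dense
  (`exists_isOpen_singleton`).
* If moreover the topology is feebly compact, a pointwise convergent sequence of isolated points
  converges (`tendsto_of_pointwise`): infinitely many distinct terms outside a neighbourhood of the
  pointwise limit would accumulate somewhere by feeble compactness, but by clopenness the
  only possible accumulation point is the pointwise limit itself.

Given infinitely many nonempty open sets `U k` of the product, choose `u k ∈ U k` with finitely
many nonzero coordinates, each of them isolated. Only countably many triples `(i, a, b)` occur in
the graphs of all coordinates of all `u k`, so by sequential compactness of a countable power of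
`Bool` some subsequence is pointwise convergent in each coordinate. It then converges in the
product, and the family `U k` is not locally finite at the limit.
-/

open Set Topology Filter

/-- The symmetric inverse semigroup `𝓘_γ^n` of partial bijections of the set `γ`
of rank `≤ n`, represented by their (finite) graphs. -/
structure SymInvSg (γ : Type*) (n : ℕ) where
  graph : Set (γ × γ)
  inj' : ∀ ⦃x y x' y'⦄, (x, y) ∈ graph → (x', y') ∈ graph → (x = x' ↔ y = y')
  finite' : graph.Finite
  card_le' : graph.ncard ≤ n

namespace SymInvSg

variable {γ : Type*} {n : ℕ}

theorem ext' {a b : SymInvSg γ n} (h : a.graph = b.graph) : a = b := by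
  cases a; cases b; simpa using h

/-- Composition of partial bijections (in the left-to-right convention of
transformation semigroups, the choice of convention being immaterial). -/
instance : Mul (SymInvSg γ n) where
  mul a b :=
    { graph := {p | ∃ y, (p.1, y) ∈ a.graph ∧ (y, p.2) ∈ b.graph}
      inj' := by
        rintro x z x' z' ⟨y, hxy, hyz⟩ ⟨y', hxy', hyz'⟩
        constructor
        · rintro rfl
          have hy : y = y' := (a.inj' hxy hxy').mp rfl
          subst hy
          exact (b.inj' hyz hyz').mp rfl
        · rintro rfl
          have hy : y = y' := (b.inj' hyz hyz').mpr rfl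
          subst hy
          exact (a.inj' hxy hxy').mpr rfl
      finite' := by
        have : {p : γ × γ | ∃ y, (p.1, y) ∈ a.graph ∧ (y, p.2) ∈ b.graph} ⊆
            (fun q : (γ × γ) × (γ × γ) => (q.1.1, q.2.2)) '' (a.graph ×ˢ b.graph) := by
          rintro ⟨x, z⟩ ⟨y, hxy, hyz⟩
          exact ⟨((x, y), (y, z)), ⟨hxy, hyz⟩, rfl⟩
        exact Set.Finite.subset (Set.Finite.image _ (a.finite'.prod b.finite')) this
      card_le' := by
        have hinj : Set.InjOn Prod.fst
            {p : γ × γ | ∃ y, (p.1, y) ∈ a.graph ∧ (y, p.2) ∈ b.graph} := by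
          rintro ⟨x, z⟩ ⟨y, hxy, hyz⟩ ⟨x', z'⟩ ⟨y', hxy', hyz'⟩ h
          simp only at h
          subst h
          have hy : y = y' := (a.inj' hxy hxy').mp rfl
          subst hy
          have hz : z = z' := (b.inj' hyz hyz').mp rfl
          simp [hz]
        calc ({p : γ × γ | ∃ y, (p.1, y) ∈ a.graph ∧ (y, p.2) ∈ b.graph}).ncard
            ≤ (Prod.fst '' a.graph).ncard := by
              refine Set.ncard_le_ncard_of_injOn Prod.fst ?_ hinj (a.finite'.image _)
              rintro ⟨x, z⟩ hp
              exact ⟨(x, hp.choose), hp.choose_spec.1, rfl⟩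
          _ ≤ a.graph.ncard := Set.ncard_image_le a.finite'
          _ ≤ n := a.card_le' }

theorem mul_graph (a b : SymInvSg γ n) :
    (a * b).graph = {p : γ × γ | ∃ y, (p.1, y) ∈ a.graph ∧ (y, p.2) ∈ b.graph} := rfl

instance : Semigroup (SymInvSg γ n) where
  mul_assoc a b c := by
    refine ext' ?_
    simp only [mul_graph]
    ext ⟨x, w⟩
    constructor
    · rintro ⟨z, ⟨y, hxy, hyz⟩, hzw⟩
      exact ⟨y, hxy, z, hyz, hzw⟩
    · rintro ⟨y, hxy, z, hyz, hzw⟩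
      exact ⟨z, ⟨y, hxy, hyz⟩, hzw⟩

/-- The zero of `𝓘_γ^n` is the empty partial map. -/
instance : Zero (SymInvSg γ n) :=
  ⟨{ graph := ∅
     inj' := by simp
     finite' := Set.finite_empty
     card_le' := by simp }⟩

/-- The natural partial order on the inverse semigroup `𝓘_γ^n`:
`α ≼ β` iff the graph of `α` is contained in the graph of `β`. -/
instance : PartialOrder (SymInvSg γ n) where
  le a b := a.graph ⊆ b.graph
  le_refl a := subset_rfl
  le_trans a b c h₁ h₂ := Set.Subset.trans h₁ h₂
  le_antisymm a b h₁ h₂ := ext' (subset_antisymm h₁ h₂)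

/-- The rank of a partial bijection: the cardinality of its domain
(equivalently, of its graph). -/
noncomputable def rank (a : SymInvSg γ n) : ℕ := a.graph.ncard

/-- `𝓘_A^n`: the subsemigroup of partial bijections with domain and range inside `A`. -/
def restrictedTo (A : Set γ) : Set (SymInvSg γ n) :=
  {α | ∀ p ∈ α.graph, p.1 ∈ A ∧ p.2 ∈ A}

end SymInvSg

/-- A topology is shift-continuous when all left and right translations are continuous,
i.e. the space is a semitopological semigroup. -/
def ShiftContinuous (X : Type*) [TopologicalSpace X] [Mul X] : Prop :=
  ∀ a : X, Continuous (fun x => a * x) ∧ Continuous (fun x => x * a)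

/-- A space is feebly compact if every locally finite family of nonempty open sets is finite. -/
def FeeblyCompact (X : Type*) [TopologicalSpace X] : Prop :=
  ∀ F : Set (Set X), (∀ U ∈ F, IsOpen U ∧ U.Nonempty) →
    LocallyFinite (fun U : F => (U : Set X)) → F.Finite

/-- A space is sequentially pracompact if it has a dense subset `D` such that every
sequence in `D` has a convergent subsequence. -/
def SequentiallyPracompact (X : Type*) [TopologicalSpace X] : Prop :=
  ∃ D : Set X, Dense D ∧ ∀ u : ℕ → X, (∀ k, u k ∈ D) →
    ∃ (x : X) (φ : ℕ → ℕ), StrictMono φ ∧ Filter.Tendsto (u ∘ φ) Filter.atTop (nhds x)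

/-- A space is totally countably pracompact if it has a dense subset `D` such that every
sequence in `D` has a subsequence whose closure is compact. -/
def TotallyCountablyPracompact (X : Type*) [TopologicalSpace X] : Prop :=
  ∃ D : Set X, Dense D ∧ ∀ u : ℕ → X, (∀ k, u k ∈ D) →
    ∃ φ : ℕ → ℕ, StrictMono φ ∧ IsCompact (closure (Set.range (u ∘ φ)))

/-- A space is countably pracompact if it has a dense subset `A` such that every infinite
subset of `A` has an accumulation point in the space. -/
def CountablyPracompact (X : Type*) [TopologicalSpace X] : Prop :=
  ∃ A : Set X, Dense A ∧ ∀ B ⊆ A, B.Infinite → ∃ x : X, AccPt x (Filter.principal B)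

/-- A space is ω-bounded-pracompact if it has a dense subset `D` such that every countable
subset of `D` has compact closure. -/
def OmegaBoundedPracompact (X : Type*) [TopologicalSpace X] : Prop :=
  ∃ D : Set X, Dense D ∧ ∀ C ⊆ D, C.Countable → IsCompact (closure C)

/-- A space is feebly ω-bounded if for every sequence of nonempty open sets there is a
compact set meeting all of them. -/
def FeeblyOmegaBounded (X : Type*) [TopologicalSpace X] : Prop :=
  ∀ U : ℕ → Set X, (∀ k, IsOpen (U k) ∧ (U k).Nonempty) →
    ∃ K : Set X, IsCompact K ∧ ∀ k, (K ∩ U k).Nonempty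

namespace SymInvSg

variable {γ : Type*} {n : ℕ}

/-- The partial bijection of rank one sending `a` to `b`. -/
def single (hn : 0 < n) (a b : γ) : SymInvSg γ n where
  graph := {(a, b)}
  inj' := by
    intro x y x' y' h h'
    simp only [mem_singleton_iff, Prod.mk.injEq] at h h'
    simp [h.1, h.2, h'.1, h'.2]
  finite' := finite_singleton _
  card_le' := by rw [ncard_singleton]; exact hn

theorem graph_zero : (0 : SymInvSg γ n).graph = ∅ := rfl

theorem single_mul_mul_single (hn : 0 < n) (a b : γ) (x : SymInvSg γ n) (h : (a, b) ∈ x.graph) :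
    single hn a a * x * single hn b b = single hn a b := by
  refine ext' ?_
  ext ⟨c, d⟩
  simp only [mul_graph, single, mem_ofPred_eq, mem_singleton_iff, Prod.mk.injEq]
  constructor
  · rintro ⟨y, ⟨z, ⟨rfl, rfl⟩, h1⟩, rfl, rfl⟩
    exact ⟨rfl, rfl⟩
  · rintro ⟨rfl, rfl⟩
    exact ⟨d, ⟨c, ⟨rfl, rfl⟩, h⟩, rfl, rfl⟩

theorem single_mul_mul_single_of_notMem (hn : 0 < n) (a b : γ) (x : SymInvSg γ n)
    (h : (a, b) ∉ x.graph) : single hn a a * x * single hn b b = 0 := by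
  refine ext' ?_
  ext ⟨c, d⟩
  simp only [mul_graph, single, graph_zero, mem_ofPred_eq, mem_singleton_iff, Prod.mk.injEq,
    mem_empty_iff_false, iff_false]
  rintro ⟨y, ⟨z, ⟨rfl, rfl⟩, h1⟩, rfl, rfl⟩
  exact h h1

theorem single_ne_zero (hn : 0 < n) (a b : γ) : single hn a b ≠ 0 := by
  intro h
  have : (a, b) ∈ (0 : SymInvSg γ n).graph := by rw [← h]; exact mem_singleton _
  exact this

/-- The set is both the preimage of a point and the complement of the preimage of `0` under the
continuous map `x ↦ e_a x e_b`. -/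
theorem isClopen_mem_graph [TopologicalSpace (SymInvSg γ n)] [T1Space (SymInvSg γ n)]
    (hn : 0 < n) (hsc : ShiftContinuous (SymInvSg γ n)) (p : γ × γ) :
    IsClopen {x : SymInvSg γ n | p ∈ x.graph} := by
  obtain ⟨a, b⟩ := p
  have hc : Continuous (fun x : SymInvSg γ n => single hn a a * x * single hn b b) :=
    (hsc _).2.comp (hsc _).1
  have h1 : {x : SymInvSg γ n | (a, b) ∈ x.graph} =
      (fun x => single hn a a * x * single hn b b) ⁻¹' {single hn a b} := by
    ext x
    by_cases h : (a, b) ∈ x.graph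
    · simp [h, single_mul_mul_single]
    · simp [h, single_mul_mul_single_of_notMem, (single_ne_zero hn a b).symm]
  have h2 : {x : SymInvSg γ n | (a, b) ∈ x.graph}ᶜ =
      (fun x => single hn a a * x * single hn b b) ⁻¹' {0} := by
    ext x
    by_cases h : (a, b) ∈ x.graph
    · simp [h, single_mul_mul_single, single_ne_zero]
    · simp [h, single_mul_mul_single_of_notMem]
  refine ⟨?_, ?_⟩
  · rw [h1]; exact isClosed_singleton.preimage hc
  · rw [← isClosed_compl_iff, h2]; exact isClosed_singleton.preimage hc

theorem exists_isOpen_singleton [TopologicalSpace (SymInvSg γ n)] [T1Space (SymInvSg γ n)]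
    (hn : 0 < n) (hsc : ShiftContinuous (SymInvSg γ n)) {U : Set (SymInvSg γ n)}
    (hU : IsOpen U) (hne : U.Nonempty) : ∃ x ∈ U, IsOpen {x} := by
  -- Take `x ∈ U` of maximal rank, so that `U ∩ ↑x = {x}`.
  have hfin : (rank '' U).Finite :=
    (finite_Iic n).subset (by rintro _ ⟨x, -, rfl⟩; exact x.card_le')
  obtain ⟨_, ⟨x, hx, rfl⟩, hmax⟩ := hfin.exists_maximal (hne.image _)
  refine ⟨x, hx, ?_⟩
  have : {x} = U ∩ ⋂ p ∈ x.graph, {y : SymInvSg γ n | p ∈ y.graph} := by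
    ext y
    simp only [mem_singleton_iff, mem_inter_iff, mem_iInter, mem_ofPred_eq]
    constructor
    · rintro rfl
      exact ⟨hx, fun p hp => hp⟩
    · rintro ⟨hy, hxy⟩
      have hle : y.rank ≤ x.rank := by
        by_contra hlt
        exact hlt (hmax ⟨y, hy, rfl⟩ (le_of_not_ge hlt))
      exact (ext' (eq_of_subset_of_ncard_le hxy hle y.finite')).symm
  rw [this]
  exact hU.inter (x.finite'.isOpen_biInter fun p _ => (isClopen_mem_graph hn hsc p).2)

/-- In a feebly compact topology, a pointwise convergent sequence of isolated points (or zeros)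
converges. -/
theorem tendsto_of_pointwise [TopologicalSpace (SymInvSg γ n)] [T1Space (SymInvSg γ n)]
    (hn : 0 < n) (hsc : ShiftContinuous (SymInvSg γ n)) (hfc : FeeblyCompact (SymInvSg γ n))
    (u : ℕ → SymInvSg γ n) (hu : ∀ k, u k = 0 ∨ IsOpen {u k}) (α : SymInvSg γ n)
    (h1 : ∀ p ∈ α.graph, ∀ᶠ k in atTop, p ∈ (u k).graph)
    (h2 : ∀ p ∉ α.graph, ∀ᶠ k in atTop, p ∉ (u k).graph) :
    Tendsto u atTop (𝓝 α) := by
  -- Agreeing with infinitely many terms at each pair already forces equality with `α`.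
  have key : ∀ x : SymInvSg γ n, (∀ p ∈ x.graph, ∃ᶠ k in atTop, p ∈ (u k).graph) →
      (∀ p ∉ x.graph, ∃ᶠ k in atTop, p ∉ (u k).graph) → x = α := by
    intro x hx1 hx2
    refine ext' ?_
    ext p
    by_cases hp : p ∈ x.graph
    · simp only [hp, true_iff]
      by_contra hα
      exact hx1 p hp (h2 p hα)
    · simp only [hp, false_iff]
      intro hα
      refine hx2 p hp ((h1 p hα).mono fun k hk hk' => hk' hk)
  rw [tendsto_nhds]
  intro W hW hαW
  by_contra hB
  have hB' : {k | u k ∉ W}.Infinite := by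
    rw [← Nat.frequently_atTop_iff_infinite]
    exact fun h => hB (h.mono fun k hk => not_not.1 hk)
  by_cases hV : (u '' {k | u k ∉ W}).Finite
  · -- Some value outside `W` is taken infinitely often.
    refine hB' (Set.Finite.of_finite_fibers u hV ?_)
    rintro _ ⟨l, hl, rfl⟩
    by_contra hfib
    have hfreq : ∃ᶠ k in atTop, u k = u l :=
      (Nat.frequently_atTop_iff_infinite.2 hfib).mono fun k hk => hk.2
    have : u l = α := key (u l) (fun p hp => hfreq.mono fun k hk => by rwa [hk])
      (fun p hp => hfreq.mono fun k hk => by rwa [hk])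
    exact hl (by simpa [this] using hαW)
  · have hV' : ((u '' {k | u k ∉ W}) \ {0}).Infinite := Set.Infinite.sdiff hV (finite_singleton _)
    have hnot : ¬ LocallyFinite (fun U : ((fun v => ({v} : Set (SymInvSg γ n))) ''
        ((u '' {k | u k ∉ W}) \ {0}) : Set _) => (U : Set (SymInvSg γ n))) := by
      intro hlf
      refine hV'.image (singleton_injective.injOn) (hfc _ ?_ hlf)
      rintro _ ⟨_, ⟨⟨k, hk, rfl⟩, h0⟩, rfl⟩
      exact ⟨(hu k).resolve_left h0, singleton_nonempty _⟩
    -- At a point where these singletons are not locally finite, every neighbourhood contains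
    -- infinitely many terms of the sequence outside `W`.
    rw [LocallyFinite] at hnot
    push Not at hnot
    obtain ⟨x, hx⟩ := hnot
    have hfreq : ∀ N ∈ 𝓝 x, ∃ᶠ k in atTop, u k ∈ N ∧ u k ∉ W := by
      intro N hN
      rw [Nat.frequently_atTop_iff_infinite]
      intro hfin
      refine hx N hN (Set.Finite.of_injOn (f := Subtype.val)
        (t := (fun k => ({u k} : Set (SymInvSg γ n))) '' {k | u k ∈ N ∧ u k ∉ W}) ?_
        Subtype.val_injective.injOn (hfin.image _))
      rintro ⟨_, ⟨_, ⟨⟨k, hk, rfl⟩, h0⟩, rfl⟩⟩ ⟨y, hy, hyN⟩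
      obtain rfl : y = u k := hy
      exact ⟨k, ⟨hyN, hk⟩, rfl⟩
    have hxα : x = α := by
      refine key x (fun p hp => ?_) (fun p hp => ?_)
      · exact (hfreq _ ((isClopen_mem_graph hn hsc p).2.mem_nhds hp)).mono fun k hk => hk.1
      · exact (hfreq _ ((isClopen_mem_graph hn hsc p).compl.2.mem_nhds hp)).mono fun k hk => hk.1
    subst hxα
    exact hfreq W (hW.mem_nhds hαW) (Eventually.of_forall fun k hk => hk.2 hk.1)

theorem card_le_of_eventually (u : ℕ → SymInvSg γ n) (t : Finset (γ × γ))
    (ht : ∀ p ∈ t, ∀ᶠ k in atTop, p ∈ (u k).graph) : t.card ≤ n := by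
  obtain ⟨k, hk⟩ := ((Filter.eventually_all_finset t).2 ht).exists
  rw [← ncard_coe_finset]
  exact (ncard_le_ncard hk (u k).finite').trans (u k).card_le'

/-- The partial bijection whose graph consists of the pairs lying in the graph of `u k` for all
large `k`; it is the pointwise limit of `u` whenever that exists. It has rank `≤ n` because any
finitely many of its pairs lie together in the graph of some `u k`. -/
def liminf (u : ℕ → SymInvSg γ n) : SymInvSg γ n where
  graph := {p | ∀ᶠ k in atTop, p ∈ (u k).graph}
  inj' := by
    intro x y x' y' h h'
    obtain ⟨k, hk, hk'⟩ := (h.and h').exists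
    exact (u k).inj' hk hk'
  finite' := by
    by_contra hinf
    obtain ⟨t, ht, hcard⟩ := Set.Infinite.exists_subset_card_eq hinf (n + 1)
    have := card_le_of_eventually u t fun p hp => ht hp
    omega
  card_le' := by
    by_contra hlt
    obtain ⟨t, ht, hcard⟩ := Set.exists_subset_card_eq (Nat.succ_le_of_lt (not_le.1 hlt))
    have htfin : t.Finite := finite_of_ncard_pos (by omega)
    have := card_le_of_eventually u htfin.toFinset fun p hp => ht (htfin.mem_toFinset.1 hp)
    rw [← ncard_eq_toFinset_card t htfin] at this
    omega

end SymInvSg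

/-- A Tychonoff product of feebly compact `T₁`-semitopological semigroups
`𝓘_{λ_i}^{n_i}` is feebly compact. -/
theorem feeblyCompact_pi {J : Type*} {γ : J → Type*} [∀ i, Infinite (γ i)] {n : J → ℕ}
    (hn : ∀ i, 0 < n i)
    [∀ i, TopologicalSpace (SymInvSg (γ i) (n i))] [∀ i, T1Space (SymInvSg (γ i) (n i))]
    (hsc : ∀ i, ShiftContinuous (SymInvSg (γ i) (n i)))
    (hfc : ∀ i, FeeblyCompact (SymInvSg (γ i) (n i))) :
    FeeblyCompact (∀ i, SymInvSg (γ i) (n i)) := by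
  classical
  intro F hF hlf
  by_contra hinf
  obtain ⟨U, hUF⟩ : ∃ U : ℕ → F, Function.Injective U :=
    ⟨_, (Set.Infinite.natEmbedding F hinf).injective⟩
  have hpt : ∀ k, ∃ u ∈ (U k : Set (∀ i, SymInvSg (γ i) (n i))),
      (∀ i, u i = 0 ∨ IsOpen {u i}) ∧ {i | u i ≠ 0}.Finite := by
    intro k
    obtain ⟨ho, v, hv⟩ := hF _ (U k).2
    obtain ⟨I, O, hO, hsub⟩ := isOpen_pi_iff.1 ho v hv
    have hd : ∀ i, ∃ x, i ∈ I → x ∈ O i ∧ IsOpen {x} := by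
      intro i
      by_cases hi : i ∈ I
      · obtain ⟨x, hx, hxo⟩ := SymInvSg.exists_isOpen_singleton (hn i) (hsc i) (hO i hi).1
          ⟨_, (hO i hi).2⟩
        exact ⟨x, fun _ => ⟨hx, hxo⟩⟩
      · exact ⟨0, fun h => absurd h hi⟩
    choose d hd using hd
    refine ⟨fun i => if i ∈ I then d i else 0, hsub ?_, ?_, ?_⟩
    · intro i hi
      have hi' : i ∈ I := hi
      simpa [hi'] using (hd i hi').1
    · intro i
      by_cases hi : i ∈ I
      · right; simpa [hi] using (hd i hi).2
      · left; simp [hi]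
    · refine I.finite_toSet.subset fun i hi => ?_
      by_contra hi'
      have hi'' : i ∉ I := hi'
      exact hi (by simp [hi''])
  choose u huU huD hufin using hpt
  -- All triples `(i, a, b)` occurring in the sequence.
  let T : Set (Σ i, γ i × γ i) := {q | ∃ k, q.2 ∈ (u k q.1).graph}
  have hT : T.Countable := by
    have : T ⊆ ⋃ k, ⋃ i ∈ {i | u k i ≠ 0}, Sigma.mk i '' (u k i).graph := by
      rintro ⟨i, p⟩ ⟨k, hk⟩
      simp only [mem_iUnion]
      refine ⟨k, i, ?_, p, hk, rfl⟩
      intro h0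
      simp only [h0] at hk
      exact hk
    exact (countable_iUnion fun k => (hufin k).countable.biUnion fun i _ =>
      ((u k i).finite'.image _).countable).mono this
  have := hT.to_subtype
  let f : ℕ → T → Bool := fun k q => decide (q.1.2 ∈ (u k q.1.1).graph)
  obtain ⟨g, φ, hφ, hg⟩ := CompactSpace.tendsto_subseq f
  have hev : ∀ i p, (∀ᶠ k in atTop, p ∈ (u (φ k) i).graph) ∨
      (∀ᶠ k in atTop, p ∉ (u (φ k) i).graph) := by
    intro i p
    by_cases hq : (⟨i, p⟩ : Σ i, γ i × γ i) ∈ T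
    · have h := (tendsto_pi_nhds.1 hg) ⟨_, hq⟩
      rw [nhds_discrete, tendsto_pure] at h
      cases hb : g ⟨_, hq⟩
      · right
        filter_upwards [h] with k hk
        simpa [f, hb] using hk
      · left
        filter_upwards [h] with k hk
        simpa [f, hb] using hk
    · right
      exact Eventually.of_forall fun k hk => hq ⟨_, hk⟩
  have hlim : Tendsto (u ∘ φ) atTop (𝓝 fun i => SymInvSg.liminf fun k => u (φ k) i) := by
    refine tendsto_pi_nhds.2 fun i => ?_
    exact SymInvSg.tendsto_of_pointwise (hn i) (hsc i) (hfc i) _ (fun k => huD _ i) _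
      (fun p hp => hp) (fun p hp => (hev i p).resolve_left hp)
  obtain ⟨N, hN, hfin⟩ := hlf fun i => SymInvSg.liminf fun k => u (φ k) i
  obtain ⟨m, hm⟩ := eventually_atTop.1 (hlim hN)
  refine (Set.infinite_of_injective_forall_mem (f := fun k => U (φ (m + k))) ?_ ?_) hfin
  · intro k l hkl
    have := hφ.injective (hUF hkl)
    omega
  · intro k
    exact ⟨u (φ (m + k)), huU _, hm _ (Nat.le_add_right m k)⟩
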